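/- arXiv:0807.0428 — 8 statements merged into one kernel-verified Lean document; each statement's English description precedes it below -/
import Mathlib

section
/- Let ω be a real number, let C₁,…,C₉ be real parameters with C₂² + C₃² + C₅² + C₆² + C₇² + C₈² ≠ 0, and let q, p, A₊, A₋ : ℝ → ℝ be differentiable functions satisfying q' = p, p' = −ω²q, A₊' = −(ω/2)A₋, A₋' = (ω/2)A₊. Let M be the 3×3 matrix with entries M¹₂ = −ω/2, M²₁ = ω/2, and all other entries 0. Define time-dependent structure constants μⁱⱼₖ (i,j,k ∈ {1,2,3}) by: μⁱⱼⱼ = 0 for all i,j; μ¹₂₃ = −μ¹₃₂ = C₂p − C₃ωq − C₄; μ²₁₃ = −μ²₃₁ = C₂p − C₃ωq + C₄; μ¹₃₁ = −μ¹₁₃ = C₂ωq + C₃p − C₁; μ²₂₃ = −μ²₃₂ = C₂ωq + C₃p + C₁; μ¹₁₂ = −μ¹₂₁ = C₅A₊ + C₆A₋; μ²₁₂ = −μ²₂₁ = C₅A₋ − C₆A₊; μ³₁₃ = −μ³₃₁ = C₇A₊ + C₈A₋; μ³₂₃ = −μ³₃₂ = C₇A₋ − C₈A₊; μ³₁₂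 = −μ³₂₁ = C₉; μ²₂₃, μ³₂₂ etc. with repeated lower indices equal to 0, and μ³₁₁ = μ³₂₂ = μ³₃₃ = μ¹₂₂ = μ²₁₁ = 0. Then for all i,j,k ∈ {1,2,3} and all t, the operadic Lax equation holds componentwise: d/dt μⁱⱼₖ = Σₛ ( μˢⱼₖ·Mⁱₛ − Mˢⱼ·μⁱₛₖ − Mˢₖ·μⁱⱼₛ ). -/
/-!
Every structure constant is an affine combination, with constant coefficients, of `q`, `p`, `A₊`
and `A₋`, so the equations of motion determine its derivative. Since `M` only has the entries
`M¹₂ = -ω/2` and `M²₁ = ω/2`, it acts on the structure constants as an infinitesimal rotation of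
`e₁`, `e₂`: the components linear in `A₊`, `A₋` turn at rate `ω/2` and those linear in `ωq`, `p`
turn at rate `ω`, in agreement with these derivatives; the constants `C₁`, `C₄`, `C₉` cancel.
`hasDerivAt_affine` differentiates the affine combinations; each of the 27 components is then
a polynomial identity.
-/

/-- The time-dependent structure constants `μⁱⱼₖ` of the 3-dimensional binary
anti-commutative operadic Lax representation for the harmonic oscillator
(Theorem 5 of the paper).  Indices: `oscMu … i j k` is `μ^{i+1}_{(j+1)(k+1)}`. -/
noncomputable def oscMu (ω C₁ C₂ C₃ C₄ C₅ C₆ C₇ C₈ C₉ : ℝ) (q p Ap Am : ℝ → ℝ) :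
    Fin 3 → Fin 3 → Fin 3 → ℝ → ℝ :=
  ![![![fun _ => 0,
        fun t => C₅ * Ap t + C₆ * Am t,
        fun t => -(C₂ * ω * q t + C₃ * p t - C₁)],
      ![fun t => -(C₅ * Ap t + C₆ * Am t),
        fun _ => 0,
        fun t => C₂ * p t - C₃ * ω * q t - C₄],
      ![fun t => C₂ * ω * q t + C₃ * p t - C₁,
        fun t => -(C₂ * p t - C₃ * ω * q t - C₄),
        fun _ => 0]],
    ![![fun _ => 0,
        fun t => C₅ * Am t - C₆ * Ap t,
        fun t => C₂ * p t - C₃ * ω * q t + C₄],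
      ![fun t => -(C₅ * Am t - C₆ * Ap t),
        fun _ => 0,
        fun t => C₂ * ω * q t + C₃ * p t + C₁],
      ![fun t => -(C₂ * p t - C₃ * ω * q t + C₄),
        fun t => -(C₂ * ω * q t + C₃ * p t + C₁),
        fun _ => 0]],
    ![![fun _ => 0,
        fun _ => C₉,
        fun t => C₇ * Ap t + C₈ * Am t],
      ![fun _ => -C₉,
        fun _ => 0,
        fun t => C₇ * Am t - C₈ * Ap t],
      ![fun t => -(C₇ * Ap t + C₈ * Am t),
        fun t => -(C₇ * Am t - C₈ * Ap t),
        fun _ => 0]]]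

/-- The matrix `M` of the operadic Lax pair: `M¹₂ = −ω/2`, `M²₁ = ω/2`,
all other entries `0`. `oscM ω i s` is `M^{i+1}_{s+1}`. -/
noncomputable def oscM (ω : ℝ) : Fin 3 → Fin 3 → ℝ :=
  ![![0, -ω / 2, 0], ![ω / 2, 0, 0], ![0, 0, 0]]

/-- Derivative of an affine combination of the four dynamical variables along the flow. -/
lemma hasDerivAt_affine {ω : ℝ} {q p Ap Am : ℝ → ℝ}
    (hq : ∀ t, HasDerivAt q (p t) t)
    (hp : ∀ t, HasDerivAt p (-ω ^ 2 * q t) t)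
    (hAp : ∀ t, HasDerivAt Ap (-(ω / 2) * Am t) t)
    (hAm : ∀ t, HasDerivAt Am ((ω / 2) * Ap t) t) (a b c d e t : ℝ) :
    HasDerivAt (fun t => a * q t + b * p t + c * Ap t + d * Am t + e)
      (a * p t + b * (-ω ^ 2 * q t) + c * (-(ω / 2) * Am t) + d * ((ω / 2) * Ap t)) t :=
  (((((hq t).const_mul a).add ((hp t).const_mul b)).add ((hAp t).const_mul c)).add
    ((hAm t).const_mul d)).add_const e

/-- Operadic Lax representation for the harmonic oscillator: under the
condition `C₂² + C₃² + C₅² + C₆² + C₇² + C₈² ≠ 0`, along any solution of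
`q' = p`, `p' = −ω²q`, `A₊' = −(ω/2)A₋`, `A₋' = (ω/2)A₊`, the structure
constants `μⁱⱼₖ` satisfy the operadic Lax equation
`d/dt μⁱⱼₖ = Σₛ (μˢⱼₖ Mⁱₛ − Mˢⱼ μⁱₛₖ − Mˢₖ μⁱⱼₛ)`. -/
theorem operadic_lax_representation_harmonic_oscillator
    (ω C₁ C₂ C₃ C₄ C₅ C₆ C₇ C₈ C₉ : ℝ)
    (hC : C₂ ^ 2 + C₃ ^ 2 + C₅ ^ 2 + C₆ ^ 2 + C₇ ^ 2 + C₈ ^ 2 ≠ 0)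
    (q p Ap Am : ℝ → ℝ)
    (hq : ∀ t, HasDerivAt q (p t) t)
    (hp : ∀ t, HasDerivAt p (-ω ^ 2 * q t) t)
    (hAp : ∀ t, HasDerivAt Ap (-(ω / 2) * Am t) t)
    (hAm : ∀ t, HasDerivAt Am ((ω / 2) * Ap t) t) :
    ∀ (i j k : Fin 3) (t : ℝ),
      HasDerivAt (oscMu ω C₁ C₂ C₃ C₄ C₅ C₆ C₇ C₈ C₉ q p Ap Am i j k)
        (∑ s : Fin 3,
          (oscMu ω C₁ C₂ C₃ C₄ C₅ C₆ C₇ C₈ C₉ q p Ap Am s j k t * oscM ω i s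
            - oscM ω s j * oscMu ω C₁ C₂ C₃ C₄ C₅ C₆ C₇ C₈ C₉ q p Ap Am i s k t
            - oscM ω s k * oscMu ω C₁ C₂ C₃ C₄ C₅ C₆ C₇ C₈ C₉ q p Ap Am i j s t)) t := by
  intro i j k t
  have H := hasDerivAt_affine hq hp hAp hAm
  -- The coefficients of `q`, `p`, `A₊`, `A₋` and `1` in `μⁱⱼₖ`.
  let c : Fin 3 → Fin 3 → Fin 3 → Fin 5 → ℝ :=
    ![![![![0, 0, 0, 0, 0], ![0, 0, C₅, C₆, 0], ![-(C₂ * ω), -C₃, 0, 0, C₁]],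
        ![![0, 0, -C₅, -C₆, 0], ![0, 0, 0, 0, 0], ![-(C₃ * ω), C₂, 0, 0, -C₄]],
        ![![C₂ * ω, C₃, 0, 0, -C₁], ![C₃ * ω, -C₂, 0, 0, C₄], ![0, 0, 0, 0, 0]]],
      ![![![0, 0, 0, 0, 0], ![0, 0, -C₆, C₅, 0], ![-(C₃ * ω), C₂, 0, 0, C₄]],
        ![![0, 0, C₆, -C₅, 0], ![0, 0, 0, 0, 0], ![C₂ * ω, C₃, 0, 0, C₁]],
        ![![C₃ * ω, -C₂, 0, 0, -C₄], ![-(C₂ * ω), -C₃, 0, 0, -C₁], ![0, 0, 0, 0, 0]]],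
      ![![![0, 0, 0, 0, 0], ![0, 0, 0, 0, C₉], ![0, 0, C₇, C₈, 0]],
        ![![0, 0, 0, 0, -C₉], ![0, 0, 0, 0, 0], ![0, 0, -C₈, C₇, 0]],
        ![![0, 0, -C₇, -C₈, 0], ![0, 0, C₈, -C₇, 0], ![0, 0, 0, 0, 0]]]]
  refine ((H (c i j k 0) (c i j k 1) (c i j k 2) (c i j k 3) (c i j k 4) t).congr_deriv
    ?_).congr_of_eventuallyEq (.of_forall fun u => ?_)
  · fin_cases i <;> fin_cases j <;> fin_cases k <;>
      simp [c, oscMu, oscM, Fin.sum_univ_three] <;> ring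
  · fin_cases i <;> fin_cases j <;> fin_cases k <;> simp [c, oscMu] <;> ring
end

section
/- For all real numbers ω, q, p and all p₀ > 0, the antisymmetric bilinear bracket on ℝ³ defined on the standard basis e₁, e₂, e₃ by [e₁,e₂] = 0, [e₂,e₃] = ((p + p₀)/(2p₀))·e₁ + (ωq/(2p₀))·e₂, [e₃,e₁] = (ωq/(2p₀))·e₁ + ((p₀ − p)/(2p₀))·e₂ satisfies the Jacobi identity [x,[y,z]] + [y,[z,x]] + [z,[x,y]] = 0 for all x, y, z ∈ ℝ³, and hence makes ℝ³ into a Lie algebra. (This is the dynamical deformation II^t of the Bianchi algebra II.) -/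
/-- The antisymmetric bilinear bracket on `ℝ³` determined by its values
`b12 = [e₁,e₂]`, `b23 = [e₂,e₃]`, `b31 = [e₃,e₁]` on the standard basis
`e₁, e₂, e₃`. -/
def bracket3 (b12 b23 b31 : Fin 3 → ℝ) (x y : Fin 3 → ℝ) : Fin 3 → ℝ :=
  (x 0 * y 1 - x 1 * y 0) • b12 + (x 1 * y 2 - x 2 * y 1) • b23
    + (x 2 * y 0 - x 0 * y 2) • b31

/-- The dynamical deformation II^t of the Bianchi algebra II, the antisymmetric
bilinear bracket on `ℝ³` with `[e₁,e₂] = 0`,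
`[e₂,e₃] = ((p+p₀)/(2p₀))e₁ + (ωq/(2p₀))e₂`,
`[e₃,e₁] = (ωq/(2p₀))e₁ + ((p₀−p)/(2p₀))e₂`, satisfies the Jacobi identity,
hence makes `ℝ³` a Lie algebra. -/
theorem bianchi_IIt_jacobi
    (ω q p p₀ : ℝ) (hp₀ : 0 < p₀)
    (br : (Fin 3 → ℝ) → (Fin 3 → ℝ) → (Fin 3 → ℝ))
    (hbr : br = bracket3
      ![0, 0, 0]
      ![(p + p₀) / (2 * p₀), ω * q / (2 * p₀), 0]
      ![ω * q / (2 * p₀), (p₀ - p) / (2 * p₀), 0]) :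
    ∀ x y z : Fin 3 → ℝ, br x (br y z) + br y (br z x) + br z (br x y) = 0 := by
  -- The Jacobi identity only uses that the plane `span {e₁, e₂}` is abelian and contains every
  -- bracket, so that `e₃` acts on it by a single endomorphism; the entries of that endomorphism
  -- are irrelevant and are therefore generalized.
  subst hbr
  generalize (p + p₀) / (2 * p₀) = a
  generalize ω * q / (2 * p₀) = b
  generalize (p₀ - p) / (2 * p₀) = c
  intro x y z
  ext i
  fin_cases i <;> simp [bracket3] <;> ring
end

section
/- For all real numbers A₊, A₋ and all p₀ > 0, the antisymmetric bilinear bracket on ℝ³ defined on the standard basis e₁, e₂, e₃ by [e₁,e₂] = (A₋/√(2p₀))·e₁ − (A₊/√(2p₀))·e₂ + e₃, [e₂,e₃] = −(A₋/√(2p₀))·e₃, [e₃,e₁] = (A₊/√(2p₀))·e₃ satisfies the Jacobi identity [x,[y,z]] + [y,[z,x]] + [z,[x,y]] = 0 for all x, y, z ∈ ℝ³, and hence makes ℝ³ into a Lie algebra. (This is the dynamical deformation IV^t of the Bianchi algebra IV.) -/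
/-- The dynamical deformation IV^t of the Bianchi algebra IV, the antisymmetric
bilinear bracket on `ℝ³` with `[e₁,e₂] = (A₋/√(2p₀))e₁ − (A₊/√(2p₀))e₂ + e₃`,
`[e₂,e₃] = −(A₋/√(2p₀))e₃`, `[e₃,e₁] = (A₊/√(2p₀))e₃`, satisfies the Jacobi
identity, hence makes `ℝ³` a Lie algebra. -/
theorem bianchi_IVt_jacobi
    (Ap Am p₀ : ℝ) (hp₀ : 0 < p₀)
    (br : (Fin 3 → ℝ) → (Fin 3 → ℝ) → (Fin 3 → ℝ))
    (hbr : br = bracket3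
      ![Am / Real.sqrt (2 * p₀), -(Ap / Real.sqrt (2 * p₀)), 1]
      ![0, 0, -(Am / Real.sqrt (2 * p₀))]
      ![0, 0, Ap / Real.sqrt (2 * p₀)]) :
    ∀ x y z : Fin 3 → ℝ, br x (br y z) + br y (br z x) + br z (br x y) = 0 := by
  subst hbr
  intro x y z
  generalize Am / Real.sqrt (2 * p₀) = a
  generalize Ap / Real.sqrt (2 * p₀) = b
  -- Each coordinate is a polynomial identity in `a`, `b` and the coordinates of `x`, `y`, `z`.
  ext i
  fin_cases i <;> simp [bracket3] <;> ring
end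

section
/- For all real numbers A₊, A₋ and all p₀ > 0, the antisymmetric bilinear bracket on ℝ³ defined on the standard basis e₁, e₂, e₃ by [e₁,e₂] = (A₋/√(2p₀))·e₁ − (A₊/√(2p₀))·e₂, [e₂,e₃] = −(A₋/√(2p₀))·e₃, [e₃,e₁] = (A₊/√(2p₀))·e₃ satisfies the Jacobi identity [x,[y,z]] + [y,[z,x]] + [z,[x,y]] = 0 for all x, y, z ∈ ℝ³, and hence makes ℝ³ into a Lie algebra. (This is the dynamical deformation V^t of the Bianchi algebra V.) -/
/-- The dynamical deformation V^t of the Bianchi algebra V, the antisymmetric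
bilinear bracket on `ℝ³` with `[e₁,e₂] = (A₋/√(2p₀))e₁ − (A₊/√(2p₀))e₂`,
`[e₂,e₃] = −(A₋/√(2p₀))e₃`, `[e₃,e₁] = (A₊/√(2p₀))e₃`, satisfies the Jacobi
identity, hence makes `ℝ³` a Lie algebra. -/
theorem bianchi_Vt_jacobi
    (Ap Am p₀ : ℝ) (hp₀ : 0 < p₀)
    (br : (Fin 3 → ℝ) → (Fin 3 → ℝ) → (Fin 3 → ℝ))
    (hbr : br = bracket3
      ![Am / Real.sqrt (2 * p₀), -(Ap / Real.sqrt (2 * p₀)), 0]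
      ![0, 0, -(Am / Real.sqrt (2 * p₀))]
      ![0, 0, Ap / Real.sqrt (2 * p₀)]) :
    ∀ x y z : Fin 3 → ℝ, br x (br y z) + br y (br z x) + br z (br x y) = 0 := by
  subst hbr
  intro x y z
  -- The structure constants involve only these two quotients, and the identity is polynomial in them.
  generalize Am / Real.sqrt (2 * p₀) = a
  generalize Ap / Real.sqrt (2 * p₀) = b
  -- With `l v = b * v 0 + a * v 1`, the bracket is `[x, y] = l y • x - l x • y`. Hence `l [y, z] = 0`
  -- and `[x, [y, z]] = -l x • [y, z]`, whose cyclic sum vanishes; `ring` checks this coordinatewise.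
  ext i
  fin_cases i <;> simp [bracket3] <;> ring
end

section
/- For all real numbers ω, q, p and all p₀ > 0, the antisymmetric bilinear bracket on ℝ³ defined on the standard basis e₁, e₂, e₃ by [e₁,e₂] = 0, [e₂,e₃] = (p/p₀)·e₁ + (ωq/p₀)·e₂, [e₃,e₁] = (ωq/p₀)·e₁ − (p/p₀)·e₂ satisfies the Jacobi identity [x,[y,z]] + [y,[z,x]] + [z,[x,y]] = 0 for all x, y, z ∈ ℝ³, and hence makes ℝ³ into a Lie algebra. (This is the dynamical deformation VI^t of the Bianchi algebra VI.) -/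
/-- The dynamical deformation VI^t of the Bianchi algebra VI, the antisymmetric
bilinear bracket on `ℝ³` with `[e₁,e₂] = 0`,
`[e₂,e₃] = (p/p₀)e₁ + (ωq/p₀)e₂`, `[e₃,e₁] = (ωq/p₀)e₁ − (p/p₀)e₂`, satisfies
the Jacobi identity, hence makes `ℝ³` a Lie algebra. -/
theorem bianchi_VIt_jacobi
    (ω q p p₀ : ℝ) (hp₀ : 0 < p₀)
    (br : (Fin 3 → ℝ) → (Fin 3 → ℝ) → (Fin 3 → ℝ))
    (hbr : br = bracket3
      ![0, 0, 0]
      ![p / p₀, ω * q / p₀, 0]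
      ![ω * q / p₀, -(p / p₀), 0]) :
    ∀ x y z : Fin 3 → ℝ, br x (br y z) + br y (br z x) + br z (br x y) = 0 := by
  subst hbr
  intro x y z
  -- All brackets lie in the abelian ideal spanned by `e₁, e₂`, on which `ad x` acts as `x 2`
  -- times a fixed linear map, so each coordinate is a polynomial identity in `p / p₀`, `ω * q / p₀`.
  ext i
  fin_cases i <;> simp [bracket3] <;> ring
end

section
/- Let a > 0, p₀ > 0, and let ω, q, p, A₊, A₋ be real numbers satisfying A₊² − A₋² = 2p and A₊·A₋ = ωq. Consider the antisymmetric bilinear bracket on ℝ³ defined on the standard basis e₁, e₂, e₃ by [e₁,e₂] = (aA₋/√(2p₀))·e₁ − (aA₊/√(2p₀))·e₂ + e₃, [e₂,e₃] = ((p₀ − p)/(2p₀))·e₁ − (ωq/(2p₀))·e₂ − (aA₋/√(2p₀))·e₃, [e₃,e₁] = −(ωq/(2p₀))·e₁ + ((p + p₀)/(2p₀))·e₂ + (aA₊/√(2p₀))·e₃ (this is the dynamical deformation VII^t_a of the Bianchi algebra VII_a). Then for all x, y, z ∈ ℝ³ the Jacobiator J(x,y,z) = [x,[y,z]] + [y,[z,x]]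 + [z,[x,y]] equals J¹·e₁ + J²·e₂ with J¹ = −(a·det(x,y,z)/√(2p₀³))·(A₋ωq + A₊(p − p₀)) and J² = −(a·det(x,y,z)/√(2p₀³))·(A₊ωq − A₋(p + p₀)), where det(x,y,z) is the determinant of the 3×3 matrix with rows the coordinates of x, y, z. -/
/-- The Jacobiator of any antisymmetric bracket on `ℝ³` is totally antisymmetric and trilinear,
hence `det(x,y,z)` times its value on the standard basis. Expanding `[e₁,[e₂,e₃]]` and its cyclic
companions in terms of the structure constants gives the stated coefficients. -/
theorem bracket3_jacobiator (b12 b23 b31 x y z : Fin 3 → ℝ) :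
    bracket3 b12 b23 b31 x (bracket3 b12 b23 b31 y z)
        + bracket3 b12 b23 b31 y (bracket3 b12 b23 b31 z x)
        + bracket3 b12 b23 b31 z (bracket3 b12 b23 b31 x y)
      = Matrix.det !![x 0, x 1, x 2; y 0, y 1, y 2; z 0, z 1, z 2] •
        ((b23 1 - b31 0) • b12 + (b31 2 - b12 1) • b23 + (b12 0 - b23 2) • b31) := by
  ext i
  simp only [bracket3, Matrix.det_fin_three, Pi.add_apply, Pi.smul_apply, smul_eq_mul,
    Matrix.of_apply, Matrix.cons_val]
  ring

/-- For the dynamical deformation VII^t_a of the Bianchi algebra VII_a, the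
Jacobiator `J(x,y,z) = [x,[y,z]] + [y,[z,x]] + [z,[x,y]]` equals
`J¹e₁ + J²e₂` with
`J¹ = −(a·det(x,y,z)/√(2p₀³))·(A₋ωq + A₊(p − p₀))` and
`J² = −(a·det(x,y,z)/√(2p₀³))·(A₊ωq − A₋(p + p₀))`. -/
theorem bianchi_VIIat_jacobiator
    (a p₀ ω q p Ap Am : ℝ) (ha : 0 < a) (hp₀ : 0 < p₀)
    (h₁ : Ap ^ 2 - Am ^ 2 = 2 * p) (h₂ : Ap * Am = ω * q)
    (br : (Fin 3 → ℝ) → (Fin 3 → ℝ) → (Fin 3 → ℝ))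
    (hbr : br = bracket3
      ![a * Am / Real.sqrt (2 * p₀), -(a * Ap / Real.sqrt (2 * p₀)), 1]
      ![(p₀ - p) / (2 * p₀), -(ω * q / (2 * p₀)), -(a * Am / Real.sqrt (2 * p₀))]
      ![-(ω * q / (2 * p₀)), (p + p₀) / (2 * p₀), a * Ap / Real.sqrt (2 * p₀)]) :
    ∀ x y z : Fin 3 → ℝ,
      br x (br y z) + br y (br z x) + br z (br x y)
        = (-(a * Matrix.det !![x 0, x 1, x 2; y 0, y 1, y 2; z 0, z 1, z 2]
              / Real.sqrt (2 * p₀ ^ 3)) * (Am * ω * q + Ap * (p - p₀)))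
            • (![1, 0, 0] : Fin 3 → ℝ)
          + (-(a * Matrix.det !![x 0, x 1, x 2; y 0, y 1, y 2; z 0, z 1, z 2]
              / Real.sqrt (2 * p₀ ^ 3)) * (Ap * ω * q - Am * (p + p₀)))
            • (![0, 1, 0] : Fin 3 → ℝ) := by
  intro x y z
  have hs : Real.sqrt (2 * p₀ ^ 3) = p₀ * Real.sqrt (2 * p₀) := by
    rw [show 2 * p₀ ^ 3 = p₀ ^ 2 * (2 * p₀) by ring, Real.sqrt_mul (sq_nonneg p₀),
      Real.sqrt_sq hp₀.le]
  have hs0 : Real.sqrt (2 * p₀) ≠ 0 := (Real.sqrt_pos.mpr (by linarith)).ne'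
  have hp0 : p₀ ≠ 0 := hp₀.ne'
  rw [hbr, bracket3_jacobiator, hs]
  -- The determinant enters both sides linearly, so it need not be expanded.
  generalize Matrix.det !![x 0, x 1, x 2; y 0, y 1, y 2; z 0, z 1, z 2] = D
  generalize Real.sqrt (2 * p₀) = s at hs0 ⊢
  ext i
  fin_cases i <;> simp [-mul_eq_zero] <;> field_simp <;> ring
end

section
/- Let a > 0, p₀ > 0, and let ω, q, p, A₊, A₋ be real numbers satisfying A₊² − A₋² = 2p, A₊·A₋ = ωq, and the energy conservation law p² + ω²q² = p₀². Then the antisymmetric bilinear bracket on ℝ³ defined on the standard basis e₁, e₂, e₃ by [e₁,e₂] = (aA₋/√(2p₀))·e₁ − (aA₊/√(2p₀))·e₂ + e₃, [e₂,e₃] = ((p₀ − p)/(2p₀))·e₁ − (ωq/(2p₀))·e₂ − (aA₋/√(2p₀))·e₃, [e₃,e₁] = −(ωq/(2p₀))·e₁ + ((p + p₀)/(2p₀))·e₂ + (aA₊/√(2p₀))·e₃ satisfies the Jacobi identity [x,[y,z]] + [y,[z,x]] + [z,[x,y]] = 0 for all x, y, z ∈ ℝ³, and hence makes ℝ³ into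 a Lie algebra. (This is the dynamical deformation VII^t_a of the Bianchi algebra VII_a.) -/
/-- Jacobi identity for structure constants of the shape occurring in VII^t_a: it reduces to
the vanishing of the first two components of `u [e₃,e₁] + v [e₂,e₃]`, the third being
identically zero. -/
lemma bracket3_jacobi_of_relations (u v P Q R : ℝ) (h1 : u * Q = v * P) (h2 : u * R = v * Q)
    (x y z : Fin 3 → ℝ) :
    bracket3 ![u, -v, 1] ![P, -Q, -u] ![-Q, R, v] x
        (bracket3 ![u, -v, 1] ![P, -Q, -u] ![-Q, R, v] y z)
      + bracket3 ![u, -v, 1] ![P, -Q, -u] ![-Q, R, v] y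
        (bracket3 ![u, -v, 1] ![P, -Q, -u] ![-Q, R, v] z x)
      + bracket3 ![u, -v, 1] ![P, -Q, -u] ![-Q, R, v] z
        (bracket3 ![u, -v, 1] ![P, -Q, -u] ![-Q, R, v] x y) = 0 := by
  -- `D` is `det(x, y, z)`.
  set D := x 0 * (y 1 * z 2 - y 2 * z 1) + x 1 * (y 2 * z 0 - y 0 * z 2)
    + x 2 * (y 0 * z 1 - y 1 * z 0) with hD
  ext i
  fin_cases i <;> simp [bracket3]
  · linear_combination (-2 * D) * h1
  · linear_combination (2 * D) * h2
  · ring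

/-- Under the defining relations of the auxiliary functions and the energy
conservation law `p² + ω²q² = p₀²`, the dynamical deformation VII^t_a of the
Bianchi algebra VII_a satisfies the Jacobi identity, hence makes `ℝ³` a Lie
algebra. -/
theorem bianchi_VIIat_jacobi
    (a p₀ ω q p Ap Am : ℝ) (ha : 0 < a) (hp₀ : 0 < p₀)
    (h₁ : Ap ^ 2 - Am ^ 2 = 2 * p) (h₂ : Ap * Am = ω * q)
    (hE : p ^ 2 + ω ^ 2 * q ^ 2 = p₀ ^ 2)
    (br : (Fin 3 → ℝ) → (Fin 3 → ℝ) → (Fin 3 → ℝ))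
    (hbr : br = bracket3
      ![a * Am / Real.sqrt (2 * p₀), -(a * Ap / Real.sqrt (2 * p₀)), 1]
      ![(p₀ - p) / (2 * p₀), -(ω * q / (2 * p₀)), -(a * Am / Real.sqrt (2 * p₀))]
      ![-(ω * q / (2 * p₀)), (p + p₀) / (2 * p₀), a * Ap / Real.sqrt (2 * p₀)]) :
    ∀ x y z : Fin 3 → ℝ, br x (br y z) + br y (br z x) + br z (br x y) = 0 := by
  have hsum : Ap ^ 2 + Am ^ 2 = 2 * p₀ := by
    have hsq : (Ap ^ 2 + Am ^ 2) ^ 2 = (2 * p₀) ^ 2 := by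
      linear_combination (Ap ^ 2 - Am ^ 2 + 2 * p) * h₁ + 4 * (Ap * Am + ω * q) * h₂ + 4 * hE
    exact (sq_eq_sq₀ (by positivity) (by positivity)).mp hsq
  have hplus : Ap ^ 2 = p + p₀ := by linarith
  have hminus : Am ^ 2 = p₀ - p := by linarith
  subst hbr
  refine bracket3_jacobi_of_relations _ _ _ _ _ ?_ ?_
  · rw [← h₂, ← hminus]
    ring
  · rw [← h₂, ← hplus]
    ring
end

section
/- Let a > 0 (the case a = 1 being the Bianchi algebra III), p₀ > 0, and let ω, q, p, A₊, A₋ be real numbers satisfying A₊² − A₋² = 2p, A₊·A₋ = ωq, and the energy conservation law p² + ω²q² = p₀². Then the antisymmetric bilinear bracket on ℝ³ defined on the standard basis e₁, e₂, e₃ by [e₁,e₂] = (aA₋/√(2p₀))·e₁ − (aA₊/√(2p₀))·e₂ − e₃, [e₂,e₃] = ((p₀ − p)/(2p₀))·e₁ − (ωq/(2p₀))·e₂ − (aA₋/√(2p₀))·e₃, [e₃,e₁] = −(ωq/(2p₀))·e₁ + ((p + p₀)/(2p₀))·e₂ + (aA₊/√(2p₀))·e₃ satisfies the Jacobi identity [x,[y,z]]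 + [y,[z,x]] + [z,[x,y]] = 0 for all x, y, z ∈ ℝ³, and hence makes ℝ³ into a Lie algebra. (This is the dynamical deformation VI^t_a of the Bianchi algebra VI_a, respectively III^t for a = 1.) -/
/-- Jacobi identity for brackets of the shape of VI^t_a. The two hypotheses say that the `e₁`-
and `e₂`-components of `α [e₃,e₁] + β [e₂,e₃]` vanish. -/
lemma bracket3_jacobi (α β u v w : ℝ) (h1 : β * u = α * w) (h2 : α * v = β * w)
    (x y z : Fin 3 → ℝ) :
    bracket3 ![α, -β, -1] ![u, -w, -α] ![-w, v, β] x
        (bracket3 ![α, -β, -1] ![u, -w, -α] ![-w, v, β] y z)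
      + bracket3 ![α, -β, -1] ![u, -w, -α] ![-w, v, β] y
        (bracket3 ![α, -β, -1] ![u, -w, -α] ![-w, v, β] z x)
      + bracket3 ![α, -β, -1] ![u, -w, -α] ![-w, v, β] z
        (bracket3 ![α, -β, -1] ![u, -w, -α] ![-w, v, β] x y) = 0 := by
  -- The common factor in each component is the determinant of `(x, y, z)`.
  set D := x 0 * (y 1 * z 2 - y 2 * z 1) + x 1 * (y 2 * z 0 - y 0 * z 2)
    + x 2 * (y 0 * z 1 - y 1 * z 0) with hD
  ext i
  fin_cases i <;> simp [bracket3]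
  · linear_combination 2 * D * h1
  · linear_combination 2 * D * h2
  · ring

/-- Under the defining relations of the auxiliary functions and the energy
conservation law `p² + ω²q² = p₀²`, the dynamical deformation VI^t_a (for a = 1: III^t) of the
Bianchi algebra VI_a (resp. III) satisfies the Jacobi identity, hence makes `ℝ³` a Lie
algebra. -/
theorem bianchi_VIat_jacobi
    (a p₀ ω q p Ap Am : ℝ) (ha : 0 < a) (hp₀ : 0 < p₀)
    (h₁ : Ap ^ 2 - Am ^ 2 = 2 * p) (h₂ : Ap * Am = ω * q)
    (hE : p ^ 2 + ω ^ 2 * q ^ 2 = p₀ ^ 2)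
    (br : (Fin 3 → ℝ) → (Fin 3 → ℝ) → (Fin 3 → ℝ))
    (hbr : br = bracket3
      ![a * Am / Real.sqrt (2 * p₀), -(a * Ap / Real.sqrt (2 * p₀)), -1]
      ![(p₀ - p) / (2 * p₀), -(ω * q / (2 * p₀)), -(a * Am / Real.sqrt (2 * p₀))]
      ![-(ω * q / (2 * p₀)), (p + p₀) / (2 * p₀), a * Ap / Real.sqrt (2 * p₀)]) :
    ∀ x y z : Fin 3 → ℝ, br x (br y z) + br y (br z x) + br z (br x y) = 0 := by
  have hsum : Ap ^ 2 + Am ^ 2 = 2 * p₀ := by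
    refine (pow_left_inj₀ (by positivity) (by positivity) two_ne_zero).mp ?_
    linear_combination (Ap ^ 2 - Am ^ 2 + 2 * p) * h₁ + 4 * (Ap * Am + ω * q) * h₂ + 4 * hE
  have hAp : Ap ^ 2 = p₀ + p := by linarith
  have hAm : Am ^ 2 = p₀ - p := by linarith
  subst hbr
  have hs : Real.sqrt (2 * p₀) ≠ 0 := by positivity
  refine bracket3_jacobi _ _ _ _ _ ?_ ?_
  · field_simp
    linear_combination Am * h₂ - Ap * hAm
  · field_simp
    linear_combination Ap * h₂ - Am * hAp
end
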